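/- arXiv:1407.5898 — 4 statements merged into one kernel-verified Lean document; each statement's English description precedes it below -/
import Mathlib

section
/- Let f, g ∈ ℤ[x] be non-zero polynomials of degrees n ≥ 1 and m ≥ 1 respectively, and let d ∈ ℤ[x] be any non-zero common divisor of f and g. Then |res(f/d, g/d)| ≤ 2^(2nm−n−m) · √((n+1)^m · (m+1)^n) · ‖f‖^m · ‖g‖^n. -/
/-!
Let `M` be the Mahler measure and let `p`, `q` have degrees `n`, `m`. The coefficient bound
`|aₖ| ≤ (n choose k) M(p)` gives `|p(z)| ≤ 2ⁿ M(p) max(1, |z|)ⁿ`. Using this for `q` at each root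
`a` of `p`, the formula `res(p, q) = lc(p)ᵐ ∏ q(a)` yields `|res(p, q)| ≤ 2ⁿᵐ M(p)ᵐ M(q)ⁿ`. Non-zero
integer polynomials have Mahler measure at least `1`, so by multiplicativity a divisor of `f` has
Mahler measure at most `M(f)`, which is at most `‖f‖` by Landau's inequality.
-/

open Polynomial

/-- The norm `‖f‖ = √(a₀² + ⋯ + aₙ²)` of an integer polynomial. -/
noncomputable def polyNorm (f : Polynomial ℤ) : ℝ :=
  Real.sqrt (∑ i ∈ Finset.range (f.natDegree + 1), ((f.coeff i : ℝ)) ^ 2)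

/-- The Sylvester matrix of `f` and `g`: an `(m+n) × (m+n)` matrix (`n = deg f`,
`m = deg g`) whose first `m` rows contain the shifted coefficients of `f` (in
descending order) and whose last `n` rows contain the shifted coefficients of `g`. -/
def sylvester {R : Type*} [CommRing R] (f g : Polynomial R) :
    Matrix (Fin (g.natDegree + f.natDegree)) (Fin (g.natDegree + f.natDegree)) R :=
  Matrix.of fun i j =>
    if (i : ℕ) < g.natDegree then
      (if (i : ℕ) ≤ (j : ℕ) ∧ (j : ℕ) ≤ (i : ℕ) + f.natDegree then
        f.coeff (f.natDegree - ((j : ℕ) - (i : ℕ))) else 0)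
    else
      (if (i : ℕ) - g.natDegree ≤ (j : ℕ) ∧ (j : ℕ) ≤ (i : ℕ) then
        g.coeff (g.natDegree - ((j : ℕ) - ((i : ℕ) - g.natDegree))) else 0)

/-- The resultant of two polynomials: the determinant of their Sylvester matrix. -/
def resultant {R : Type*} [CommRing R] (f g : Polynomial R) : R :=
  (_root_.sylvester f g).det

theorem norm_eval_le_two_pow_mul_mahlerMeasure (p : ℂ[X]) (z : ℂ) :
    ‖p.eval z‖ ≤ 2 ^ p.natDegree * p.mahlerMeasure * max 1 ‖z‖ ^ p.natDegree := by
  have norm_term_le (k : ℕ) (hk : k ∈ Finset.range (p.natDegree + 1)) :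
      ‖p.coeff k * z ^ k‖ ≤
        p.natDegree.choose k * p.mahlerMeasure * max 1 ‖z‖ ^ p.natDegree := by
    rw [norm_mul, norm_pow]
    gcongr
    · exact mul_nonneg (Nat.cast_nonneg _) p.mahlerMeasure_nonneg
    · exact p.norm_coeff_le_choose_mul_mahlerMeasure k
    · calc ‖z‖ ^ k ≤ max 1 ‖z‖ ^ k := by gcongr; exact le_max_right ..
        _ ≤ max 1 ‖z‖ ^ p.natDegree :=
          pow_le_pow_right₀ (le_max_left ..) (Finset.mem_range_succ_iff.mp hk)
  calc ‖p.eval z‖ ≤ ∑ k ∈ Finset.range (p.natDegree + 1), ‖p.coeff k * z ^ k‖ := by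
        rw [eval_eq_sum_range]
        exact norm_sum_le _ _
    _ ≤ ∑ k ∈ Finset.range (p.natDegree + 1),
          p.natDegree.choose k * p.mahlerMeasure * max 1 ‖z‖ ^ p.natDegree :=
        Finset.sum_le_sum norm_term_le
    _ = 2 ^ p.natDegree * p.mahlerMeasure * max 1 ‖z‖ ^ p.natDegree := by
        rw [← Finset.sum_mul, ← Finset.sum_mul, ← Nat.cast_sum, Nat.sum_range_choose,
          Nat.cast_pow, Nat.cast_two]

theorem norm_resultant_le_mahlerMeasure (p q : ℂ[X]) :
    ‖Polynomial.resultant p q‖ ≤ 2 ^ (p.natDegree * q.natDegree) *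
      p.mahlerMeasure ^ q.natDegree * q.mahlerMeasure ^ p.natDegree := by
  have hp : p.Splits := IsAlgClosed.splits p
  have prod_norm_eval_le : (p.roots.map fun a ↦ ‖q.eval a‖).prod ≤
      (2 ^ q.natDegree * q.mahlerMeasure) ^ p.natDegree *
        (p.roots.map fun a ↦ max 1 ‖a‖).prod ^ q.natDegree := by
    calc (p.roots.map fun a ↦ ‖q.eval a‖).prod
      _ ≤ (p.roots.map fun a ↦
            2 ^ q.natDegree * q.mahlerMeasure * max 1 ‖a‖ ^ q.natDegree).prod :=
          Multiset.prod_map_le_prod_map₀ _ _ (fun _ _ ↦ norm_nonneg _)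
            fun a _ ↦ norm_eval_le_two_pow_mul_mahlerMeasure q a
      _ = _ := by
          rw [Multiset.prod_map_mul, Multiset.map_const', Multiset.prod_replicate,
            ← hp.natDegree_eq_card_roots, Multiset.prod_map_pow]
  calc ‖Polynomial.resultant p q‖
      = ‖p.leadingCoeff‖ ^ q.natDegree * (p.roots.map fun a ↦ ‖q.eval a‖).prod := by
        rw [resultant_eq_prod_eval p q _ le_rfl hp, norm_mul, norm_pow]
        congr 1
        exact (Multiset.prod_hom' p.roots (normHom (α := ℂ)) q.eval).symm
    _ ≤ ‖p.leadingCoeff‖ ^ q.natDegree * ((2 ^ q.natDegree * q.mahlerMeasure) ^ p.natDegree *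
          (p.roots.map fun a ↦ max 1 ‖a‖).prod ^ q.natDegree) := by gcongr
    _ = _ := by rw [mahlerMeasure_eq_leadingCoeff_mul_prod_roots p]; ring

-- Mathlib puts the coefficients of `g` before those of `f`, in columns and in ascending order.
theorem sylvester_eq_submatrix_transpose {R : Type*} [CommRing R] (f g : R[X]) :
    _root_.sylvester f g =
      (Polynomial.sylvester f g f.natDegree g.natDegree).transpose.submatrix
        ((finCongr (add_comm g.natDegree f.natDegree)).trans Fin.revPerm)
        ((finCongr (add_comm g.natDegree f.natDegree)).trans Fin.revPerm) := by
  ext i j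
  obtain ⟨k, hk⟩ : ∃ k, k = Fin.rev (Fin.cast (add_comm g.natDegree f.natDegree) i) := ⟨_, rfl⟩
  have hk_val : (k : ℕ) = f.natDegree + g.natDegree - (i + 1) := by simp [hk, Fin.val_rev]
  simp only [_root_.sylvester, Polynomial.sylvester, Matrix.submatrix_apply,
    Matrix.transpose_apply, Matrix.of_apply, Equiv.trans_apply, finCongr_apply,
    Fin.revPerm_apply, ← hk]
  induction k using Fin.addCases with
  | left k =>
    simp only [Fin.val_castAdd] at hk_val
    simp only [Fin.addCases_left, Set.mem_Icc, Fin.val_rev, Fin.val_cast]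
    grind
  | right k =>
    simp only [Fin.val_natAdd] at hk_val
    simp only [Fin.addCases_right, Set.mem_Icc, Fin.val_rev, Fin.val_cast]
    grind

theorem resultant_eq_polynomial_resultant {R : Type*} [CommRing R] (f g : R[X]) :
    _root_.resultant f g = Polynomial.resultant f g := by
  rw [_root_.resultant, sylvester_eq_submatrix_transpose, Matrix.det_submatrix_equiv_self,
    Matrix.det_transpose, Polynomial.resultant]

theorem polyNorm_nonneg (f : ℤ[X]) : 0 ≤ polyNorm f :=
  Real.sqrt_nonneg _

theorem mahlerMeasure_map_le_polyNorm (f : ℤ[X]) :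
    (f.map (Int.castRingHom ℂ)).mahlerMeasure ≤ polyNorm f := by
  have support_subset : (f.map (Int.castRingHom ℂ)).support ⊆ Finset.range (f.natDegree + 1) :=
    (support_map_subset _ f).trans supp_subset_range_natDegree_succ
  calc (f.map (Int.castRingHom ℂ)).mahlerMeasure
    _ ≤ √(∑ i ∈ (f.map (Int.castRingHom ℂ)).support, ‖(f.map (Int.castRingHom ℂ)).coeff i‖ ^ 2) :=
        mahlerMeasure_le_sqrt_sum_sq_norm_coeff _
    _ ≤ √(∑ i ∈ Finset.range (f.natDegree + 1), ‖(f.map (Int.castRingHom ℂ)).coeff i‖ ^ 2) := by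
        gcongr
    _ = polyNorm f := by
        simp only [polyNorm, coeff_map, eq_intCast, Complex.norm_intCast, sq_abs]

theorem mahlerMeasure_map_le_of_dvd {p f : ℤ[X]} (hf : f ≠ 0) (hpf : p ∣ f) :
    (p.map (Int.castRingHom ℂ)).mahlerMeasure ≤ (f.map (Int.castRingHom ℂ)).mahlerMeasure := by
  obtain ⟨d, rfl⟩ := hpf
  rw [Polynomial.map_mul, mahlerMeasure_mul]
  exact le_mul_of_one_le_right (mahlerMeasure_nonneg _)
    (one_le_mahlerMeasure_of_ne_zero (right_ne_zero_of_mul hf))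

theorem mahlerMeasure_map_pow_le_polyNorm_pow_of_dvd {p f : ℤ[X]} (hf : f ≠ 0) (hpf : p ∣ f)
    {k l : ℕ} (hkl : k ≤ l) :
    (p.map (Int.castRingHom ℂ)).mahlerMeasure ^ k ≤ polyNorm f ^ l := by
  have hp : p ≠ 0 := ne_zero_of_dvd_ne_zero hf hpf
  calc (p.map (Int.castRingHom ℂ)).mahlerMeasure ^ k
    _ ≤ (p.map (Int.castRingHom ℂ)).mahlerMeasure ^ l :=
        pow_le_pow_right₀ (one_le_mahlerMeasure_of_ne_zero hp) hkl
    _ ≤ polyNorm f ^ l :=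
        pow_le_pow_left₀ (mahlerMeasure_nonneg _)
          ((mahlerMeasure_map_le_of_dvd hf hpf).trans (mahlerMeasure_map_le_polyNorm f)) _

theorem abs_resultant_le_mahlerMeasure (p q : ℤ[X]) :
    |((_root_.resultant p q : ℤ) : ℝ)| ≤ 2 ^ (p.natDegree * q.natDegree) *
      (p.map (Int.castRingHom ℂ)).mahlerMeasure ^ q.natDegree *
      (q.map (Int.castRingHom ℂ)).mahlerMeasure ^ p.natDegree := by
  have natDegree_map_cast (f : ℤ[X]) : (f.map (Int.castRingHom ℂ)).natDegree = f.natDegree :=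
    natDegree_map_eq_of_injective (RingHom.injective_int _) f
  have norm_resultant_map_le :=
    norm_resultant_le_mahlerMeasure (p.map (Int.castRingHom ℂ)) (q.map (Int.castRingHom ℂ))
  rwa [resultant_map_map, natDegree_map_cast, natDegree_map_cast,
    ← resultant_eq_polynomial_resultant, eq_intCast, Complex.norm_intCast] at norm_resultant_map_le

theorem abs_resultant_le_polyNorm_of_dvd {f g p q : ℤ[X]} (hf : f ≠ 0) (hg : g ≠ 0)
    (hpf : p ∣ f) (hqg : q ∣ g) :
    |((_root_.resultant p q : ℤ) : ℝ)| ≤ 2 ^ (f.natDegree * g.natDegree) *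
      polyNorm f ^ g.natDegree * polyNorm g ^ f.natDegree := by
  have hp_deg : p.natDegree ≤ f.natDegree := natDegree_le_of_dvd hpf hf
  have hq_deg : q.natDegree ≤ g.natDegree := natDegree_le_of_dvd hqg hg
  have polyNorm_f_nonneg := polyNorm_nonneg f
  have mahlerMeasure_p_nonneg := (p.map (Int.castRingHom ℂ)).mahlerMeasure_nonneg
  have mahlerMeasure_q_nonneg := (q.map (Int.castRingHom ℂ)).mahlerMeasure_nonneg
  refine (abs_resultant_le_mahlerMeasure p q).trans ?_
  gcongr ?_ * ?_ * ?_
  · exact pow_le_pow_right₀ one_le_two (Nat.mul_le_mul hp_deg hq_deg)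
  · exact mahlerMeasure_map_pow_le_polyNorm_pow_of_dvd hf hpf hq_deg
  · exact mahlerMeasure_map_pow_le_polyNorm_pow_of_dvd hg hqg hp_deg

theorem two_pow_mul_le_two_pow_mul_sqrt {n m : ℕ} (hn : 1 ≤ n) (hm : 1 ≤ m) :
    (2 : ℝ) ^ (n * m) ≤
      2 ^ (2 * n * m - n - m) * √(((n : ℝ) + 1) ^ m * ((m : ℝ) + 1) ^ n) := by
  have exponent_le : n * m * 2 ≤ (2 * n * m - n - m) * 2 + (m + n) := by
    have : 2 * n * m = n * m * 2 := by ring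
    omega
  have two_le_succ {k : ℕ} (hk : 1 ≤ k) : (2 : ℝ) ≤ k + 1 := by exact_mod_cast Nat.succ_le_succ hk
  refine (sq_le_sq₀ (by positivity) (by positivity)).mp ?_
  calc ((2 : ℝ) ^ (n * m)) ^ 2
    _ = 2 ^ (n * m * 2) := (pow_mul ..).symm
    _ ≤ 2 ^ ((2 * n * m - n - m) * 2 + (m + n)) := pow_le_pow_right₀ one_le_two exponent_le
    _ = (2 ^ (2 * n * m - n - m)) ^ 2 * (2 ^ m * 2 ^ n) := by rw [pow_add, pow_add, pow_mul]
    _ ≤ (2 ^ (2 * n * m - n - m)) ^ 2 * (((n : ℝ) + 1) ^ m * ((m : ℝ) + 1) ^ n) := by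
        gcongr
        · exact two_le_succ hn
        · exact two_le_succ hm
    _ = _ := by rw [mul_pow, Real.sq_sqrt (by positivity)]

theorem resultant_quotient_bound_general {f g p q : ℤ[X]}
    (hn : 1 ≤ f.natDegree) (hm : 1 ≤ g.natDegree) (hpf : p ∣ f) (hqg : q ∣ g) :
    |((_root_.resultant p q : ℤ) : ℝ)| ≤
      2 ^ (2 * f.natDegree * g.natDegree - f.natDegree - g.natDegree) *
        √((f.natDegree + 1) ^ g.natDegree * (g.natDegree + 1) ^ f.natDegree) *
        polyNorm f ^ g.natDegree * polyNorm g ^ f.natDegree := by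
  have hf : f ≠ 0 := ne_zero_of_natDegree_gt hn
  have hg : g ≠ 0 := ne_zero_of_natDegree_gt hm
  have polyNorm_f_nonneg := polyNorm_nonneg f
  have polyNorm_g_nonneg := polyNorm_nonneg g
  refine (abs_resultant_le_polyNorm_of_dvd hf hg hpf hqg).trans ?_
  gcongr
  exact two_pow_mul_le_two_pow_mul_sqrt hn hm

/-- For non-zero `f, g ∈ ℤ[x]` of degrees `n, m ≥ 1` and any non-zero common divisor
`d` of `f` and `g`:
`|res(f/d, g/d)| ≤ 2^(2nm - n - m) · √((n+1)^m (m+1)^n) · ‖f‖^m · ‖g‖^n`. -/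
theorem resultant_quotient_bound (f g d f₁ g₁ : Polynomial ℤ)
    (hf : f ≠ 0) (hg : g ≠ 0) (hd : d ≠ 0)
    (hn : 1 ≤ f.natDegree) (hm : 1 ≤ g.natDegree)
    (hf₁ : f = d * f₁) (hg₁ : g = d * g₁) :
    |((_root_.resultant f₁ g₁ : ℤ) : ℝ)| ≤
      2 ^ (2 * f.natDegree * g.natDegree - f.natDegree - g.natDegree) *
        Real.sqrt ((f.natDegree + 1) ^ g.natDegree * (g.natDegree + 1) ^ f.natDegree) *
        polyNorm f ^ g.natDegree * polyNorm g ^ f.natDegree :=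
  resultant_quotient_bound_general hn hm (hf₁ ▸ dvd_mul_left f₁ d) (hg₁ ▸ dvd_mul_left g₁ d)
end

section
/- Let f, g ∈ ℤ[x] be non-zero polynomials with leading coefficients a₀ and b₀ respectively. If h ∈ ℤ[x] is a common divisor of f and g of degree k, then every coefficient c of h satisfies |c| ≤ 2^k · gcd(a₀,b₀) · min{ ‖f‖/|a₀| , ‖g‖/|b₀| }. -/
open Polynomial

/-!
Write `M` for the Mahler measure. It is multiplicative, and `|lc q| ≤ M q` for every `q`, so
`M p / |lc p|` can only grow when `p` is replaced by a multiple `p * q`. Together with Landau's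
inequality `M f ≤ ‖f‖` this gives `M h ≤ |lc h| * ‖f‖ / |lc f|` whenever `h ∣ f`. With
`k = deg h`, the `i`-th coefficient of `h` is at most `(k choose i) * M h` in absolute value, and
over `ℤ` the leading coefficient of a common divisor of `f` and `g` divides both `a₀` and `b₀`,
hence is bounded by their gcd.
-/

theorem mahlerMeasure_mul_norm_leadingCoeff_le_of_dvd {p q : ℂ[X]} (hpq : p ∣ q) :
    p.mahlerMeasure * ‖q.leadingCoeff‖ ≤ ‖p.leadingCoeff‖ * q.mahlerMeasure := by
  obtain ⟨r, rfl⟩ := hpq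
  calc p.mahlerMeasure * ‖(p * r).leadingCoeff‖
      = ‖p.leadingCoeff‖ * (p.mahlerMeasure * ‖r.leadingCoeff‖) := by
        rw [leadingCoeff_mul, norm_mul]; ring
    _ ≤ ‖p.leadingCoeff‖ * (p.mahlerMeasure * r.mahlerMeasure) := by
        gcongr
        · exact p.mahlerMeasure_nonneg
        · exact r.leadingCoeff_le_mahlerMeasure
    _ = ‖p.leadingCoeff‖ * (p * r).mahlerMeasure := by rw [mahlerMeasure_mul]

theorem norm_coeff_mul_norm_leadingCoeff_le_of_dvd {p q : ℂ[X]} (hpq : p ∣ q) (i : ℕ) :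
    ‖p.coeff i‖ * ‖q.leadingCoeff‖ ≤
      p.natDegree.choose i * ‖p.leadingCoeff‖ * √(∑ j ∈ q.support, ‖q.coeff j‖ ^ 2) :=
  calc ‖p.coeff i‖ * ‖q.leadingCoeff‖
      ≤ p.natDegree.choose i * p.mahlerMeasure * ‖q.leadingCoeff‖ := by
        gcongr
        exact p.norm_coeff_le_choose_mul_mahlerMeasure i
    _ = p.natDegree.choose i * (p.mahlerMeasure * ‖q.leadingCoeff‖) := mul_assoc _ _ _
    _ ≤ p.natDegree.choose i * (‖p.leadingCoeff‖ * q.mahlerMeasure) :=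
        mul_le_mul_of_nonneg_left (mahlerMeasure_mul_norm_leadingCoeff_le_of_dvd hpq)
          (Nat.cast_nonneg _)
    _ = p.natDegree.choose i * ‖p.leadingCoeff‖ * q.mahlerMeasure := (mul_assoc _ _ _).symm
    _ ≤ p.natDegree.choose i * ‖p.leadingCoeff‖ * √(∑ j ∈ q.support, ‖q.coeff j‖ ^ 2) := by
        gcongr
        exact q.mahlerMeasure_le_sqrt_sum_sq_norm_coeff

theorem sqrt_sum_sq_norm_coeff_map_intCast (f : ℤ[X]) :
    √(∑ j ∈ (f.map (Int.castRingHom ℂ)).support, ‖(f.map (Int.castRingHom ℂ)).coeff j‖ ^ 2) =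
      polyNorm f := by
  rw [polyNorm, support_map_of_injective f (Int.castRingHom ℂ).injective_int]
  simp only [coeff_map, eq_intCast, Complex.norm_intCast, sq_abs]
  congr 1
  refine Finset.sum_subset supp_subset_range_natDegree_succ fun j _ hj => ?_
  simp [notMem_support_iff.mp hj]

theorem abs_coeff_le_of_dvd {f h : ℤ[X]} (hf : f ≠ 0) (hdvd : h ∣ f) (i : ℕ) :
    |(h.coeff i : ℝ)| ≤ h.natDegree.choose i * |(h.leadingCoeff : ℝ)| *
      (polyNorm f / |(f.leadingCoeff : ℝ)|) := by
  have hinj : Function.Injective (Int.castRingHom ℂ) := (Int.castRingHom ℂ).injective_int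
  have hlc : 0 < |(f.leadingCoeff : ℝ)| := by simpa using hf
  have hcoeff := norm_coeff_mul_norm_leadingCoeff_le_of_dvd
    (Polynomial.map_dvd (Int.castRingHom ℂ) hdvd) i
  rw [sqrt_sum_sq_norm_coeff_map_intCast, natDegree_map_eq_of_injective hinj,
    leadingCoeff_map_of_injective hinj, leadingCoeff_map_of_injective hinj, coeff_map] at hcoeff
  simp only [eq_intCast, Complex.norm_intCast] at hcoeff
  rwa [← mul_div_assoc, le_div_iff₀ hlc]

theorem abs_leadingCoeff_le_gcd_of_dvd {f g h : ℤ[X]} (hf : f ≠ 0) (hdf : h ∣ f) (hdg : h ∣ g) :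
    |h.leadingCoeff| ≤ Int.gcd f.leadingCoeff g.leadingCoeff := by
  have hdvd : h.leadingCoeff ∣ (Int.gcd f.leadingCoeff g.leadingCoeff : ℤ) :=
    Int.dvd_coe_gcd (leadingCoeff_dvd_leadingCoeff hdf) (leadingCoeff_dvd_leadingCoeff hdg)
  have hpos : 0 < Int.gcd f.leadingCoeff g.leadingCoeff :=
    Int.gcd_pos_of_ne_zero_left _ (leadingCoeff_ne_zero.2 hf)
  exact Int.le_of_dvd (mod_cast hpos) ((abs_dvd _ _).2 hdvd)

/-- If `h ∈ ℤ[x]` is a common divisor of degree `k` of the non-zero polynomials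
`f, g ∈ ℤ[x]` with leading coefficients `a₀, b₀`, then every coefficient `c` of `h`
satisfies `|c| ≤ 2^k · gcd(a₀,b₀) · min { ‖f‖/|a₀|, ‖g‖/|b₀| }`. -/
theorem coeff_bound_common_divisor_deg (f g h : Polynomial ℤ)
    (hf : f ≠ 0) (hg : g ≠ 0) (hdf : h ∣ f) (hdg : h ∣ g) :
    ∀ i : ℕ, (|h.coeff i| : ℝ) ≤
      2 ^ h.natDegree * (Int.gcd f.leadingCoeff g.leadingCoeff : ℝ) *
        min (polyNorm f / |(f.leadingCoeff : ℝ)|)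
            (polyNorm g / |(g.leadingCoeff : ℝ)|) := by
  intro i
  have hchoose : (h.natDegree.choose i : ℝ) ≤ 2 ^ h.natDegree :=
    mod_cast Nat.choose_le_two_pow _ _
  have hlc : |(h.leadingCoeff : ℝ)| ≤ Int.gcd f.leadingCoeff g.leadingCoeff :=
    mod_cast abs_leadingCoeff_le_gcd_of_dvd hf hdf hdg
  calc |(h.coeff i : ℝ)|
      ≤ h.natDegree.choose i * |(h.leadingCoeff : ℝ)| *
          min (polyNorm f / |(f.leadingCoeff : ℝ)|) (polyNorm g / |(g.leadingCoeff : ℝ)|) := by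
        rw [mul_min_of_nonneg _ _ (by positivity)]
        exact le_min (abs_coeff_le_of_dvd hf hdf i) (abs_coeff_le_of_dvd hg hdg i)
    _ ≤ _ := by
        gcongr
        exact le_min (div_nonneg (polyNorm_nonneg f) (abs_nonneg _))
          (div_nonneg (polyNorm_nonneg g) (abs_nonneg _))
end

section
/- Let f, g ∈ ℤ[x] be non-zero polynomials with leading coefficients a₀ and b₀, let d ∈ ℤ[x] be a greatest common divisor of f and g, and set w = gcd(a₀,b₀). Let Q be a finite set of primes, none dividing w, whose cardinality is strictly greater than the number of pairwise distinct prime divisors of |res(f/d, g/d)|. Then min over q ∈ Q of deg gcd(f_q, g_q) equals deg d. -/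
open Polynomial

/-- The degree of the gcd of the reductions of `f, g ∈ ℤ[x]` modulo a prime `q`,
computed in the Euclidean domain `(ℤ/qℤ)[x]` (junk value `0` if `q` is not prime). -/
noncomputable def modGcdDegree (q : ℕ) (f g : Polynomial ℤ) : ℕ :=
  if hq : q.Prime then
    letI : Fact q.Prime := ⟨hq⟩
    (EuclideanDomain.gcd (f.map (Int.castRingHom (ZMod q)))
      (g.map (Int.castRingHom (ZMod q)))).natDegree
  else 0

section Gauss

variable {R : Type*} [CommRing R] [IsDomain R] [IsGCDMonoid R]

theorem exists_isPrimitive_associated_map (K : Type*) [Field K] [Algebra R K] [IsFractionRing R K]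
    {k : K[X]} (hk : k ≠ 0) :
    ∃ p : R[X], p.IsPrimitive ∧ Associated (p.map (algebraMap R K)) k := by
  let : NormalizedGCDMonoid R := Nonempty.some inferInstance
  obtain ⟨b, hb, hN⟩ := IsLocalization.integerNormalization_spec (nonZeroDivisors R) k
  set N := IsLocalization.integerNormalization (nonZeroDivisors R) k
  have isUnit_C_algebraMap {r : R} (hr : r ≠ 0) : IsUnit (C (algebraMap R K r)) :=
    isUnit_C.2 (by simpa using hr)
  have hN0 : N ≠ 0 := by
    rwa [Ne, IsFractionRing.integerNormalization_eq_zero_iff]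
  refine ⟨N.primPart, N.isPrimitive_primPart, ?_⟩
  have hcontent : Associated (N.primPart.map (algebraMap R K)) (N.map (algebraMap R K)) := by
    nth_rewrite 2 [N.eq_C_content_mul_primPart]
    rw [Polynomial.map_mul, map_C]
    exact associated_unit_mul_right _ _
      (isUnit_C_algebraMap (by rwa [Ne, content_eq_zero_iff]))
  have hdenom : Associated (N.map (algebraMap R K)) k := by
    rw [hN, Algebra.smul_def, Polynomial.algebraMap_apply]
    exact associated_unit_mul_left _ _ (isUnit_C_algebraMap (nonZeroDivisors.ne_zero hb))
  exact hcontent.trans hdenom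

theorem isCoprime_map_of_isRelPrime (K : Type*) [Field K] [Algebra R K] [IsFractionRing R K]
    {f g : R[X]} (h : IsRelPrime f g) :
    IsCoprime (f.map (algebraMap R K)) (g.map (algebraMap R K)) := by
  refine IsRelPrime.isCoprime fun k hkf hkg => ?_
  obtain rfl | hk := eq_or_ne k 0
  · rw [zero_dvd_iff, Polynomial.map_eq_zero_iff (IsFractionRing.injective R K)] at hkf hkg
    exact (not_isUnit_zero (h hkf.symm.dvd hkg.symm.dvd)).elim
  · obtain ⟨p, hp, hpk⟩ := exists_isPrimitive_associated_map (R := R) K hk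
    have hpf : p ∣ f := hp.dvd_of_fraction_map_dvd_fraction_map (hpk.dvd.trans hkf)
    have hpg : p ∣ g := hp.dvd_of_fraction_map_dvd_fraction_map (hpk.dvd.trans hkg)
    exact hpk.isUnit ((h hpf hpg).map (mapRingHom (algebraMap R K)))

theorem resultant_ne_zero_of_isRelPrime {f g : R[X]} (h : IsRelPrime f g) :
    Polynomial.resultant f g ≠ 0 := by
  have hinj : Function.Injective (algebraMap R (FractionRing R)) := IsFractionRing.injective _ _
  have hres := resultant_ne_zero _ _ (isCoprime_map_of_isRelPrime (FractionRing R) h)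
  rw [natDegree_map_eq_of_injective hinj, natDegree_map_eq_of_injective hinj,
    resultant_map_map] at hres
  exact ne_zero_of_map hres

end Gauss

theorem isCoprime_of_resultant_ne_zero {K : Type*} [Field K] {f g : K[X]} {m n : ℕ}
    (hm : f.natDegree ≤ m) (hn : g.natDegree ≤ n) (h0 : f ≠ 0 ∨ g ≠ 0)
    (hres : Polynomial.resultant f g m n ≠ 0) : IsCoprime f g := by
  obtain ⟨k, rfl⟩ := Nat.exists_eq_add_of_le hm
  obtain ⟨l, rfl⟩ := Nat.exists_eq_add_of_le hn
  rw [resultant_add_left_deg _ _ _ _ _ le_rfl, resultant_add_right_deg _ _ _ _ _ le_rfl] at hres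
  by_contra hfg
  exact right_ne_zero_of_mul (right_ne_zero_of_mul hres) (resultant_eq_zero_iff.2 ⟨h0, hfg⟩)

theorem dvd_of_dvd_mul_of_isCoprime {R : Type*} [CommSemiring R] {a b d k : R}
    (hab : IsCoprime a b) (ha : k ∣ d * a) (hb : k ∣ d * b) : k ∣ d := by
  obtain ⟨u, v, huv⟩ := hab
  have hd : d = u * (d * a) + v * (d * b) := by
    calc d = d * (u * a + v * b) := by rw [huv, mul_one]
      _ = u * (d * a) + v * (d * b) := by ring
  rw [hd]
  exact dvd_add (ha.mul_left u) (hb.mul_left v)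

theorem isRelPrime_of_forall_dvd_mul {M : Type*} [CommMonoidWithZero M] [IsCancelMulZero M]
    {a b d : M} (hd : d ≠ 0) (h : ∀ e, e ∣ d * a → e ∣ d * b → e ∣ d) : IsRelPrime a b := by
  intro e hea heb
  have hde : d * e ∣ d * 1 := by
    rw [mul_one]
    exact h (d * e) (mul_dvd_mul_left d hea) (mul_dvd_mul_left d heb)
  exact isUnit_of_dvd_one ((mul_dvd_mul_iff_left hd).1 hde)

section LeadingCoeff

variable {R S : Type*} [Semiring R] [Semiring S] (φ : R →+* S) {d f : R[X]}

theorem map_ne_zero_of_map_leadingCoeff_ne_zero (hf : φ f.leadingCoeff ≠ 0) : f.map φ ≠ 0 := by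
  intro h
  rw [leadingCoeff, ← coeff_map, h, coeff_zero] at hf
  exact hf rfl

theorem map_leadingCoeff_ne_zero_of_dvd [NoZeroDivisors R] (hdf : d ∣ f)
    (hf : φ f.leadingCoeff ≠ 0) : φ d.leadingCoeff ≠ 0 :=
  ne_zero_of_dvd_ne_zero hf (map_dvd φ (leadingCoeff_dvd_leadingCoeff hdf))

end LeadingCoeff

section GcdMap

variable {R K : Type*} [CommRing R] [NoZeroDivisors R] [Field K] [DecidableEq K] (φ : R →+* K)
  {a b d f g : R[X]}

theorem natDegree_le_natDegree_gcd_map (hdf : d ∣ f) (hdg : d ∣ g)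
    (hlc : φ f.leadingCoeff ≠ 0 ∨ φ g.leadingCoeff ≠ 0) :
    d.natDegree ≤ (EuclideanDomain.gcd (f.map φ) (g.map φ)).natDegree := by
  have hd : φ d.leadingCoeff ≠ 0 :=
    hlc.elim (map_leadingCoeff_ne_zero_of_dvd φ hdf) (map_leadingCoeff_ne_zero_of_dvd φ hdg)
  have hgcd : EuclideanDomain.gcd (f.map φ) (g.map φ) ≠ 0 := by
    rw [Ne, EuclideanDomain.gcd_eq_zero_iff, not_and_or]
    exact hlc.imp (map_ne_zero_of_map_leadingCoeff_ne_zero φ)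
      (map_ne_zero_of_map_leadingCoeff_ne_zero φ)
  rw [← natDegree_map_of_leadingCoeff_ne_zero φ hd]
  exact natDegree_le_of_dvd
    (EuclideanDomain.dvd_gcd (Polynomial.map_dvd φ hdf) (Polynomial.map_dvd φ hdg)) hgcd

theorem natDegree_gcd_map_mul_left
    (hlc : φ (d * a).leadingCoeff ≠ 0 ∨ φ (d * b).leadingCoeff ≠ 0)
    (hres : φ (Polynomial.resultant a b) ≠ 0) :
    (EuclideanDomain.gcd ((d * a).map φ) ((d * b).map φ)).natDegree = d.natDegree := by
  have hd : d.map φ ≠ 0 := map_ne_zero_of_map_leadingCoeff_ne_zero φ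
    (hlc.elim (map_leadingCoeff_ne_zero_of_dvd φ (dvd_mul_right d a))
      (map_leadingCoeff_ne_zero_of_dvd φ (dvd_mul_right d b)))
  have hab : a.map φ ≠ 0 ∨ b.map φ ≠ 0 :=
    hlc.imp (map_ne_zero_of_map_leadingCoeff_ne_zero φ ∘
        map_leadingCoeff_ne_zero_of_dvd φ (dvd_mul_left a d))
      (map_ne_zero_of_map_leadingCoeff_ne_zero φ ∘
        map_leadingCoeff_ne_zero_of_dvd φ (dvd_mul_left b d))
  have hcoprime : IsCoprime (a.map φ) (b.map φ) :=
    isCoprime_of_resultant_ne_zero natDegree_map_le natDegree_map_le hab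
      (by rwa [resultant_map_map])
  have hdvd : EuclideanDomain.gcd ((d * a).map φ) ((d * b).map φ) ∣ d.map φ := by
    rw [Polynomial.map_mul, Polynomial.map_mul]
    exact dvd_of_dvd_mul_of_isCoprime hcoprime
      (EuclideanDomain.gcd_dvd_left _ _) (EuclideanDomain.gcd_dvd_right _ _)
  exact ((natDegree_le_of_dvd hdvd hd).trans natDegree_map_le).antisymm
    (natDegree_le_natDegree_gcd_map φ (dvd_mul_right d a) (dvd_mul_right d b) hlc)

end GcdMap

theorem intCast_ne_zero_or_of_not_dvd_gcd {R : Type*} [AddGroupWithOne R] {q : ℕ} [CharP R q]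
    {m n : ℤ} (h : ¬ q ∣ Int.gcd m n) : (m : R) ≠ 0 ∨ (n : R) ≠ 0 := by
  contrapose! h
  simp only [CharP.intCast_eq_zero_iff R q] at h
  exact Int.natCast_dvd_natCast.1 (Int.dvd_coe_gcd h.1 h.2)

section ModGcdDegree

variable {q : ℕ} {a b d f g : ℤ[X]}

theorem natDegree_le_modGcdDegree (hq : q.Prime) (hdf : d ∣ f) (hdg : d ∣ g)
    (hw : ¬ q ∣ Int.gcd f.leadingCoeff g.leadingCoeff) : d.natDegree ≤ modGcdDegree q f g := by
  have : Fact q.Prime := ⟨hq⟩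
  rw [modGcdDegree, dif_pos hq]
  exact natDegree_le_natDegree_gcd_map _ hdf hdg (intCast_ne_zero_or_of_not_dvd_gcd hw)

theorem modGcdDegree_mul_left (hq : q.Prime)
    (hw : ¬ q ∣ Int.gcd (d * a).leadingCoeff (d * b).leadingCoeff)
    (hres : ¬ (q : ℤ) ∣ _root_.resultant a b) :
    modGcdDegree q (d * a) (d * b) = d.natDegree := by
  have : Fact q.Prime := ⟨hq⟩
  rw [modGcdDegree, dif_pos hq]
  refine natDegree_gcd_map_mul_left _ (intCast_ne_zero_or_of_not_dvd_gcd hw) ?_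
  rw [resultant_eq_polynomial_resultant] at hres
  exact (ZMod.intCast_zmod_eq_zero_iff_dvd _ q).not.2 hres

end ModGcdDegree

theorem exists_mem_not_dvd_of_card_primeFactors_lt {n : ℤ} {Q : Finset ℕ} (hn : n ≠ 0)
    (hQ : ∀ q ∈ Q, q.Prime) (hcard : n.natAbs.primeFactors.card < Q.card) :
    ∃ q ∈ Q, ¬ (q : ℤ) ∣ n := by
  obtain ⟨q, hqQ, hq⟩ := Finset.exists_mem_notMem_of_card_lt_card hcard
  exact ⟨q, hqQ, fun hdvd =>
    hq ((hQ q hqQ).mem_primeFactors (Int.natCast_dvd.1 hdvd) (Int.natAbs_ne_zero.2 hn))⟩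

/-- Let `d` be a gcd of the non-zero polynomials `f, g ∈ ℤ[x]`, and let `Q` be a finite
set of primes, none dividing `w = gcd(a₀, b₀)` (the gcd of the leading coefficients),
with `|Q|` strictly greater than the number of pairwise distinct prime divisors of
`|res(f/d, g/d)|`. Then `min_{q ∈ Q} deg gcd(f_q, g_q) = deg d`. -/
theorem min_modGcdDegree_eq_degree_gcd (f g d f₁ g₁ : Polynomial ℤ)
    (hf : f ≠ 0) (hg : g ≠ 0)
    (hdf : d ∣ f) (hdg : d ∣ g)
    (hdgcd : ∀ e : Polynomial ℤ, e ∣ f → e ∣ g → e ∣ d)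
    (hf₁ : f = d * f₁) (hg₁ : g = d * g₁)
    (Q : Finset ℕ) (hQprime : ∀ q ∈ Q, q.Prime)
    (hQw : ∀ q ∈ Q, ¬ (q ∣ Int.gcd f.leadingCoeff g.leadingCoeff))
    (hQcard : (_root_.resultant f₁ g₁).natAbs.primeFactors.card < Q.card) :
    Q.inf' (Finset.card_pos.mp (Nat.lt_of_le_of_lt (Nat.zero_le _) hQcard))
        (fun q => modGcdDegree q f g) = d.natDegree := by
  subst hf₁ hg₁
  have hcofactors : IsRelPrime f₁ g₁ :=
    isRelPrime_of_forall_dvd_mul (left_ne_zero_of_mul hf) hdgcd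
  have hres : _root_.resultant f₁ g₁ ≠ 0 := by
    rw [resultant_eq_polynomial_resultant]
    exact resultant_ne_zero_of_isRelPrime hcofactors
  obtain ⟨q, hqQ, hq⟩ := exists_mem_not_dvd_of_card_primeFactors_lt hres hQprime hQcard
  apply le_antisymm
  · calc Q.inf' _ (fun q => modGcdDegree q (d * f₁) (d * g₁))
        ≤ modGcdDegree q (d * f₁) (d * g₁) := Finset.inf'_le _ hqQ
      _ = d.natDegree := modGcdDegree_mul_left (hQprime q hqQ) (hQw q hqQ) hq
  · exact Finset.le_inf' _ _ fun p hp =>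
      natDegree_le_modGcdDegree (hQprime p hp) hdf hdg (hQw p hp)
end

section
/- Let f, g ∈ ℤ[x] be non-zero primitive polynomials with leading coefficients a₀ and b₀, and let p be a prime not dividing gcd(a₀,b₀). Suppose D ∈ ℤ[x] is a primitive polynomial such that D divides both f and g in ℤ[x] and deg D = deg gcd(f_p, g_p), where gcd(f_p, g_p) is a greatest common divisor of f_p and g_p in (ℤ/pℤ)[x]. Then D is a greatest common divisor of f and g in ℤ[x], i.e. every common divisor of f and g divides D. -/
open Polynomial

/-!
Let `G` be a gcd of `f` and `g`. Its leading coefficient divides both `a₀` and `b₀`, so it survives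
reduction modulo `p`, and `G` keeps its degree. As `G_p` divides `gcd(f_p, g_p)`, this gives
`deg G ≤ deg gcd(f_p, g_p) = deg D`. But `D` divides `G`, so the cofactor is a constant, and it is a
unit because `G` is primitive.
-/

section Reduction

variable {R S : Type*} [Semiring R] [NoZeroDivisors R] [Semiring S] {φ : R →+* S}

theorem map_leadingCoeff_ne_zero_of_dvd_s19 {f q : R[X]} (hqf : q ∣ f) (hf : φ f.leadingCoeff ≠ 0) :
    φ q.leadingCoeff ≠ 0 :=
  ne_zero_of_dvd_ne_zero hf (map_dvd φ (leadingCoeff_dvd_leadingCoeff hqf))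

theorem natDegree_le_natDegree_of_dvd_map [NoZeroDivisors S] {f q : R[X]} {e : S[X]}
    (hf : φ f.leadingCoeff ≠ 0) (hqf : q ∣ f) (hef : e ∣ f.map φ) (hqe : q.map φ ∣ e) :
    q.natDegree ≤ e.natDegree := by
  have hf_map : f.map φ ≠ 0 := fun h ↦ hf (by simpa using congr_arg (coeff · f.natDegree) h)
  calc q.natDegree = (q.map φ).natDegree :=
        (natDegree_map_of_leadingCoeff_ne_zero φ (map_leadingCoeff_ne_zero_of_dvd_s19 hqf hf)).symm
    _ ≤ e.natDegree := natDegree_le_of_dvd hqe (ne_zero_of_dvd_ne_zero hf_map hef)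

end Reduction

theorem associated_of_isPrimitive_of_dvd_of_natDegree_le {R : Type*} [CommSemiring R]
    [NoZeroDivisors R] {p q : R[X]} (hq : q.IsPrimitive) (hpq : p ∣ q)
    (hdeg : q.natDegree ≤ p.natDegree) : Associated p q := by
  nontriviality R
  obtain ⟨k, rfl⟩ := hpq
  obtain ⟨hp₀, hk₀⟩ := mul_ne_zero_iff.mp hq.ne_zero
  have hk_deg : k.natDegree = 0 := by
    rw [natDegree_mul hp₀ hk₀] at hdeg
    omega
  obtain ⟨c, rfl⟩ := natDegree_eq_zero.mp hk_deg
  have hc : IsUnit c := hq c (dvd_mul_left (C c) p)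
  exact associated_mul_unit_right p (C c) (hc.map C)

theorem intCast_zmod_ne_zero_or_of_not_dvd_gcd {n : ℕ} {a b : ℤ} (h : ¬ n ∣ Int.gcd a b) :
    (a : ZMod n) ≠ 0 ∨ (b : ZMod n) ≠ 0 := by
  contrapose! h
  simp only [ZMod.intCast_zmod_eq_zero_iff_dvd] at h
  exact Int.dvd_gcd h.1 h.2

theorem primitive_divisor_of_modular_degree_is_gcd_general {R S : Type*} [CommRing R] [IsDomain R]
    [IsGCDMonoid R] [Semiring S] [NoZeroDivisors S] (φ : R →+* S) {f g D : R[X]} {e : S[X]}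
    (hfg : ∀ c : R, C c ∣ f → C c ∣ g → IsUnit c)
    (hlc : φ f.leadingCoeff ≠ 0 ∨ φ g.leadingCoeff ≠ 0) (hDf : D ∣ f) (hDg : D ∣ g)
    (hef : e ∣ f.map φ) (heg : e ∣ g.map φ)
    (hegcd : ∀ e' : S[X], e' ∣ f.map φ → e' ∣ g.map φ → e' ∣ e)
    (hdeg : e.natDegree ≤ D.natDegree) :
    ∀ h : R[X], h ∣ f → h ∣ g → h ∣ D := by
  obtain ⟨_⟩ : IsGCDMonoid R[X] := inferInstance
  have hGf : gcd f g ∣ f := gcd_dvd_left f g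
  have hGg : gcd f g ∣ g := gcd_dvd_right f g
  have hG_prim : (gcd f g).IsPrimitive := fun c hc ↦ hfg c (hc.trans hGf) (hc.trans hGg)
  have hGe : (gcd f g).map φ ∣ e :=
    hegcd _ (Polynomial.map_dvd φ hGf) (Polynomial.map_dvd φ hGg)
  have hG_deg : (gcd f g).natDegree ≤ e.natDegree := hlc.elim
    (natDegree_le_natDegree_of_dvd_map · hGf hef hGe)
    (natDegree_le_natDegree_of_dvd_map · hGg heg hGe)
  have hDG : Associated D (gcd f g) := associated_of_isPrimitive_of_dvd_of_natDegree_le hG_prim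
    (dvd_gcd hDf hDg) (hG_deg.trans hdeg)
  exact fun h hhf hhg ↦ (dvd_gcd hhf hhg).trans hDG.symm.dvd

/-- Let `f, g ∈ ℤ[x]` be non-zero primitive polynomials with leading coefficients
`a₀, b₀` and let `p` be a prime not dividing `gcd(a₀, b₀)`. If `D ∈ ℤ[x]` is a
primitive common divisor of `f` and `g` whose degree equals the degree of a greatest
common divisor `e` of the reductions `f_p, g_p` in `(ℤ/pℤ)[x]`, then `D` is a greatest
common divisor of `f` and `g` in `ℤ[x]`: every common divisor of `f` and `g`
divides `D`. -/
theorem primitive_divisor_of_modular_degree_is_gcd (f g : Polynomial ℤ)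
    (hf : f ≠ 0) (hg : g ≠ 0) (hfprim : f.IsPrimitive) (hgprim : g.IsPrimitive)
    (p : ℕ) (hp : p.Prime)
    (hw : ¬ (p ∣ Int.gcd f.leadingCoeff g.leadingCoeff))
    (D : Polynomial ℤ) (hDprim : D.IsPrimitive) (hDf : D ∣ f) (hDg : D ∣ g)
    (e : Polynomial (ZMod p))
    (hef : e ∣ f.map (Int.castRingHom (ZMod p)))
    (heg : e ∣ g.map (Int.castRingHom (ZMod p)))
    (hegcd : ∀ e' : Polynomial (ZMod p),
      e' ∣ f.map (Int.castRingHom (ZMod p)) →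
      e' ∣ g.map (Int.castRingHom (ZMod p)) → e' ∣ e)
    (hdeg : D.natDegree = e.natDegree) :
    ∀ h : Polynomial ℤ, h ∣ f → h ∣ g → h ∣ D := by
  have : Fact p.Prime := ⟨hp⟩
  exact primitive_divisor_of_modular_degree_is_gcd_general (Int.castRingHom (ZMod p))
    (fun c hcf _ ↦ hfprim c hcf) (intCast_zmod_ne_zero_or_of_not_dvd_gcd hw) hDf hDg hef heg hegcd
    hdeg.ge
end
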